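/- Assume Condition 2 (quasi-spiked covariance structure): λ_k ≥ λ_{k+1} + d and λ_{k+1} − λ_p ≤ ε for some d, ε > 0. Decompose δ = δ_1 + δ_2 with δ_1 ∈ W_1 = span{ξ_1, ..., ξ_k} and δ_2 ∈ W_2 = span{ξ_{k+1}, ..., ξ_p}, and assume δ_2 ≠ 0 (i.e., δ ∉ W_1). Set d̃ = d·ρ||δ_2||_2^2/(d + ρ||δ||_2^2) and assume ε < d̃/2. Then ||U^T β||_1 / ||U^T β||_2 ≤ √(k+1) + √(p−k−1) · ((λ_p + ε)/λ_p) · ( ε/λ_p + √( ε/(d̃ − 2ε) ) ). (Theorem 2, second part) -/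

import Mathlib

open Matrix

/-!
Let `L = λ_p`, let `W` be the span of the leading eigenvectors of `Σ`, and let `V = W ⊔ ℝ δ`.
On `Vᗮ` the forms of `Σ` and `Σ + ρ δ δᵀ` agree and are at most `L + ε`, so by interlacing all but
`k + 1` eigenvalues of `Σ + ρ δ δᵀ` are at most `L + ε`. On the other hand the form of
`Σ + ρ δ δᵀ - L` is at least `d̃ ‖P_V x‖²`, so a vector `x` in the span of the remaining
eigenvectors satisfies `‖P_V x‖ ≤ √(ε / d̃) ‖x‖`. Since `Σ` is nearly `L` on `Wᗮ` and `Σ β = δ`,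
the vector `β` is within `(ε / L) ‖β‖` of `V`. Hence the projection of `β` to the span of these
eigenvectors has norm at most `(ε / L + √(ε / d̃)) ‖β‖`, and the Cauchy-Schwarz inequality on the
first `k + 1` and on the remaining coordinates of `Uᵀ β` gives the bound.
-/

open Submodule InnerProductSpace WithLp
open scoped RealInnerProductSpace

section Eigenbasis

variable {ι E : Type*} [NormedAddCommGroup E] [InnerProductSpace ℝ E]

/-- `A` is diagonal in the orthonormal basis `b`, with eigenvalues `μ`. -/
def IsEigenbasis [Fintype ι] (A : E →ₗ[ℝ] E) (b : OrthonormalBasis ι ℝ E) (μ : ι → ℝ) : Prop :=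
  ∀ i, A (b i) = μ i • b i

lemma mem_orthogonal_span_image_iff {v : ι → E} {s : Set ι} {x : E} :
    x ∈ (span ℝ (v '' s))ᗮ ↔ ∀ i ∈ s, ⟪v i, x⟫ = 0 := by
  refine ⟨fun hx i hi ↦ hx _ (subset_span (Set.mem_image_of_mem v hi)), fun hx ↦ ?_⟩
  have hspan : span ℝ (v '' s) ≤ (ℝ ∙ x)ᗮ :=
    span_le.2 <| Set.forall_mem_image.2 fun i hi ↦
      mem_orthogonal_singleton_iff_inner_left.2 (hx i hi)
  exact fun w hw ↦ mem_orthogonal_singleton_iff_inner_left.1 (hspan hw)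

variable [Fintype ι]

lemma inner_eq_zero_of_mem_span_image {b : OrthonormalBasis ι ℝ E} {s : Set ι} {x : E}
    (hx : x ∈ span ℝ (b '' s)) {i : ι} (hi : i ∉ s) : ⟪b i, x⟫ = 0 := by
  have hbi : b i ∈ (span ℝ (b '' s))ᗮ :=
    mem_orthogonal_span_image_iff.2 fun j hj ↦ b.inner_eq_zero (ne_of_mem_of_not_mem hj hi)
  exact inner_left_of_mem_orthogonal hx hbi

lemma span_image_compl_le_orthogonal (b : OrthonormalBasis ι ℝ E) (s : Set ι) :
    span ℝ (b '' sᶜ) ≤ (span ℝ (b '' s))ᗮ := fun _ hx ↦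
  mem_orthogonal_span_image_iff.2 fun _ hi ↦ inner_eq_zero_of_mem_span_image hx (not_not.2 hi)

lemma finrank_span_image (b : OrthonormalBasis ι ℝ E) (s : Finset ι) :
    Module.finrank ℝ (span ℝ (b '' s)) = s.card := by
  have hfinrank := finrank_span_eq_card
    (b.orthonormal.linearIndependent.comp ((↑) : s → ι) Subtype.val_injective)
  rwa [Set.range_comp, Subtype.range_coe_subtype, Fintype.card_coe] at hfinrank

namespace IsEigenbasis

variable {A : E →ₗ[ℝ] E} {b : OrthonormalBasis ι ℝ E} {μ : ι → ℝ}

lemma inner_map (h : IsEigenbasis A b μ) (i : ι) (x : E) : ⟪b i, A x⟫ = μ i * ⟪b i, x⟫ := by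
  classical
  conv_lhs => rw [← b.sum_repr' x]
  simp [map_sum, h _, inner_sum, inner_smul_right, b.inner_eq_ite, mul_comm]

lemma inner_map_self (h : IsEigenbasis A b μ) (x : E) :
    ⟪x, A x⟫ = ∑ i, μ i * ⟪b i, x⟫ ^ 2 := by
  rw [← b.sum_inner_mul_inner]
  refine Finset.sum_congr rfl fun i _ ↦ ?_
  rw [h.inner_map, real_inner_comm]
  ring

lemma mul_norm_sq_le_inner_map_self (h : IsEigenbasis A b μ) {c : ℝ} {x : E}
    (hc : ∀ i, ⟪b i, x⟫ ≠ 0 → c ≤ μ i) : c * ‖x‖ ^ 2 ≤ ⟪x, A x⟫ := by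
  rw [h.inner_map_self, ← b.sum_sq_inner_right, Finset.mul_sum]
  refine Finset.sum_le_sum fun i _ ↦ ?_
  obtain hi | hi := eq_or_ne ⟪b i, x⟫ 0
  · simp [hi]
  · exact mul_le_mul_of_nonneg_right (hc i hi) (sq_nonneg _)

lemma neg (h : IsEigenbasis A b μ) : IsEigenbasis (-A) b (-μ) := fun i ↦ by
  rw [LinearMap.neg_apply, h i, Pi.neg_apply, neg_smul]

lemma inner_map_self_le_mul_norm_sq (h : IsEigenbasis A b μ) {c : ℝ} {x : E}
    (hc : ∀ i, ⟪b i, x⟫ ≠ 0 → μ i ≤ c) : ⟪x, A x⟫ ≤ c * ‖x‖ ^ 2 := by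
  have hneg := h.neg.mul_norm_sq_le_inner_map_self (c := -c) fun i hi ↦ neg_le_neg (hc i hi)
  rw [LinearMap.neg_apply, inner_neg_right, neg_mul] at hneg
  exact neg_le_neg_iff.1 hneg

lemma norm_map_sub_smul_le (h : IsEigenbasis A b μ) {c r : ℝ} {x : E} (hr : 0 ≤ r)
    (hc : ∀ i, ⟪b i, x⟫ ≠ 0 → |μ i - c| ≤ r) : ‖A x - c • x‖ ≤ r * ‖x‖ := by
  refine le_of_sq_le_sq ?_ (by positivity)
  rw [mul_pow, ← b.sum_sq_inner_right, ← b.sum_sq_inner_right, Finset.mul_sum]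
  refine Finset.sum_le_sum fun i _ ↦ ?_
  rw [inner_sub_right, h.inner_map, real_inner_smul_right, ← sub_mul, mul_pow]
  obtain hi | hi := eq_or_ne ⟪b i, x⟫ 0
  · simp [hi]
  · exact mul_le_mul_of_nonneg_right (sq_le_sq' (abs_le.1 (hc i hi)).1 (abs_le.1 (hc i hi)).2)
      (sq_nonneg _)

lemma map_mem_span_image (h : IsEigenbasis A b μ) {s : Set ι} {x : E}
    (hx : x ∈ span ℝ (b '' s)) : A x ∈ span ℝ (b '' s) := by
  have hspan : span ℝ (b '' s) ≤ (span ℝ (b '' s)).comap A :=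
    span_le.2 <| Set.forall_mem_image.2 fun i hi ↦ by
      simpa only [SetLike.mem_coe, mem_comap, h i] using
        smul_mem _ (μ i) (subset_span (Set.mem_image_of_mem b hi))
  exact hspan hx

lemma map_mem_orthogonal_span_image (h : IsEigenbasis A b μ) {s : Set ι} {x : E}
    (hx : x ∈ (span ℝ (b '' s))ᗮ) : A x ∈ (span ℝ (b '' s))ᗮ := by
  rw [mem_orthogonal_span_image_iff] at hx ⊢
  intro i hi
  rw [h.inner_map, hx i hi, mul_zero]

end IsEigenbasis

end Eigenbasis

section Interlacing

variable {E : Type*} [NormedAddCommGroup E] [InnerProductSpace ℝ E]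

lemma exists_mem_orthogonal_ne_zero_of_finrank_lt {V M : Submodule ℝ E} [FiniteDimensional ℝ V]
    [FiniteDimensional ℝ M] (hlt : Module.finrank ℝ V < Module.finrank ℝ M) :
    ∃ x ∈ M, x ∈ Vᗮ ∧ x ≠ 0 := by
  have hker := LinearMap.ker_ne_bot_of_finrank_lt
    (f := (V.orthogonalProjectionOnto : E →ₗ[ℝ] V) ∘ₗ M.subtype) hlt
  obtain ⟨x, hx, hx0⟩ := exists_mem_ne_zero_of_ne_bot hker
  exact ⟨x, x.2, V.orthogonalProjectionOnto_eq_zero_iff.1 hx, by simpa using hx0⟩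

lemma IsEigenbasis.eigenvalue_le_of_inner_map_self_le {p : ℕ} {A : E →ₗ[ℝ] E}
    {u : OrthonormalBasis (Fin p) ℝ E} {η : Fin p → ℝ} (hA : IsEigenbasis A u η)
    (hη : Antitone η) {V : Submodule ℝ E} [FiniteDimensional ℝ V] {c : ℝ}
    (hV : ∀ x ∈ Vᗮ, ⟪x, A x⟫ ≤ c * ‖x‖ ^ 2) {i : Fin p} (hi : Module.finrank ℝ V ≤ i) :
    η i ≤ c := by
  let M : Submodule ℝ E := span ℝ (u '' Set.Iic i)
  have hM : Module.finrank ℝ M = i + 1 := by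
    rw [← Fin.card_Iic, ← finrank_span_image u, Finset.coe_Iic]
  have : FiniteDimensional ℝ M := .span_of_finite ℝ (Set.toFinite _)
  obtain ⟨x, hxM, hxV, hx0⟩ :=
    exists_mem_orthogonal_ne_zero_of_finrank_lt (V := V) (M := M) (by omega)
  have hlow : η i * ‖x‖ ^ 2 ≤ ⟪x, A x⟫ :=
    hA.mul_norm_sq_le_inner_map_self fun j hj ↦
      hη (not_not.1 fun hji ↦ hj (inner_eq_zero_of_mem_span_image hxM hji))
  exact le_of_mul_le_mul_right (hlow.trans (hV x hxV)) (by positivity)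

end Interlacing

section QuasiSpiked

variable {E : Type*} [NormedAddCommGroup E] [InnerProductSpace ℝ E]

/-- The quasi-spiked structure (Condition 2) of a covariance operator `T`, in terms of the span `W`
of its leading eigenvectors instead of an eigenbasis: `T` is reduced by `W`, is at least `L + d`
on `W`, and is within `ε` of the scalar `L`, and at least `L`, on `Wᗮ`. -/
structure IsQuasiSpiked (T : E →ₗ[ℝ] E) (W : Submodule ℝ E) (L d ε : ℝ) : Prop where
  base_pos : 0 < L
  gap_pos : 0 < d
  width_nonneg : 0 ≤ ε
  map_mem : ∀ x ∈ W, T x ∈ W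
  map_mem_orthogonal : ∀ x ∈ Wᗮ, T x ∈ Wᗮ
  le_inner_map_self : ∀ x ∈ W, (L + d) * ‖x‖ ^ 2 ≤ ⟪x, T x⟫
  le_inner_map_self_orthogonal : ∀ x ∈ Wᗮ, L * ‖x‖ ^ 2 ≤ ⟪x, T x⟫
  norm_map_sub_smul_le : ∀ x ∈ Wᗮ, ‖T x - L • x‖ ≤ ε * ‖x‖

lemma IsEigenbasis.isQuasiSpiked {ι : Type*} [Fintype ι] {T : E →ₗ[ℝ] E}
    {b : OrthonormalBasis ι ℝ E} {μ : ι → ℝ} (h : IsEigenbasis T b μ) {s : Set ι} {L d ε : ℝ}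
    (hL : 0 < L) (hd : 0 < d) (hε : 0 ≤ ε) (hspike : ∀ i ∈ s, L + d ≤ μ i)
    (hbulk : ∀ i ∉ s, μ i ∈ Set.Icc L (L + ε)) :
    IsQuasiSpiked T (span ℝ (b '' s)) L d ε := by
  have hmem {x : E} (hx : x ∈ span ℝ (b '' s)) {i : ι} (hi : ⟪b i, x⟫ ≠ 0) : i ∈ s :=
    not_not.1 fun his ↦ hi (inner_eq_zero_of_mem_span_image hx his)
  have hnotMem {x : E} (hx : x ∈ (span ℝ (b '' s))ᗮ) {i : ι} (hi : ⟪b i, x⟫ ≠ 0) : i ∉ s :=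
    fun his ↦ hi (mem_orthogonal_span_image_iff.1 hx i his)
  exact
    { base_pos := hL
      gap_pos := hd
      width_nonneg := hε
      map_mem := fun _ ↦ h.map_mem_span_image
      map_mem_orthogonal := fun _ ↦ h.map_mem_orthogonal_span_image
      le_inner_map_self := fun _ hx ↦
        h.mul_norm_sq_le_inner_map_self fun i hi ↦ hspike i (hmem hx hi)
      le_inner_map_self_orthogonal := fun _ hx ↦
        h.mul_norm_sq_le_inner_map_self fun i hi ↦ (hbulk i (hnotMem hx hi)).1
      norm_map_sub_smul_le := fun _ hx ↦ h.norm_map_sub_smul_le hε fun i hi ↦ by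
        obtain ⟨hlow, hup⟩ := hbulk i (hnotMem hx hi)
        exact abs_sub_le_iff.2 ⟨by linarith, by linarith⟩ }

lemma IsEigenbasis.isQuasiSpiked_of_antitone {ι : Type*} [Fintype ι] [LinearOrder ι]
    {T : E →ₗ[ℝ] E} {b : OrthonormalBasis ι ℝ E} {μ : ι → ℝ} (h : IsEigenbasis T b μ)
    (hμ : Antitone μ) {a z : ι} {d ε : ℝ} (hz : IsTop z) (hpos : 0 < μ z) (hd : 0 < d)
    (hgap : ∀ i < a, μ a + d ≤ μ i) (hquasi : μ a - μ z ≤ ε) :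
    IsQuasiSpiked T (span ℝ (b '' Set.Iio a)) (μ z) d ε := by
  have hza : μ z ≤ μ a := hμ (hz a)
  refine h.isQuasiSpiked hpos hd ((sub_nonneg.2 hza).trans hquasi)
    (fun i hi ↦ (add_le_add_left hza d).trans (hgap i hi)) fun i hi ↦ ⟨hμ (hz i), ?_⟩
  have hia : μ i ≤ μ a := hμ (not_lt.1 hi)
  linarith

/-- The effective gap `d̃` of the paper; `Wᗮ.starProjection δ` is the component `δ₂` of `δ`. -/
noncomputable def effectiveGap (W : Submodule ℝ E) [W.HasOrthogonalProjection] (δ : E)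
    (d ρ : ℝ) : ℝ :=
  d * ρ * ‖Wᗮ.starProjection δ‖ ^ 2 / (d + ρ * ‖δ‖ ^ 2)

lemma effectiveGap_pos {W : Submodule ℝ E} [W.HasOrthogonalProjection] {δ : E} {d ρ : ℝ}
    (hd : 0 < d) (hρ : 0 < ρ) (hδ : δ ∉ W) : 0 < effectiveGap W δ d ρ := by
  have hδ₂ : Wᗮ.starProjection δ ≠ 0 := by
    rwa [Ne, starProjection_apply_eq_zero_iff, orthogonal_orthogonal]
  rw [effectiveGap]
  positivity

lemma add_notMem_of_mem_orthogonal {W : Submodule ℝ E} {δ₁ δ₂ : E} (hδ₁ : δ₁ ∈ W)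
    (hδ₂ : δ₂ ∈ Wᗮ) (hne : δ₂ ≠ 0) : δ₁ + δ₂ ∉ W := fun hmem ↦
  hne (disjoint_def.1 W.orthogonal_disjoint δ₂ ((W.add_mem_iff_right hδ₁).1 hmem) hδ₂)

lemma effectiveGap_add {W : Submodule ℝ E} [W.HasOrthogonalProjection] {δ₁ δ₂ : E}
    (hδ₁ : δ₁ ∈ W) (hδ₂ : δ₂ ∈ Wᗮ) (d ρ : ℝ) :
    effectiveGap W (δ₁ + δ₂) d ρ = d * ρ * ‖δ₂‖ ^ 2 / (d + ρ * ‖δ₁ + δ₂‖ ^ 2) := by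
  have hproj : Wᗮ.starProjection (δ₁ + δ₂) = δ₂ :=
    eq_starProjection_of_mem_orthogonal' hδ₂ (W.le_orthogonal_orthogonal hδ₁) (add_comm δ₁ δ₂)
  rw [effectiveGap, hproj]

lemma norm_smul_add_smul_sq_real (s t : ℝ) (x y : E) :
    ‖s • x + t • y‖ ^ 2 = s ^ 2 * ‖x‖ ^ 2 + 2 * (s * t) * ⟪x, y⟫ + t ^ 2 * ‖y‖ ^ 2 := by
  rw [norm_add_sq_real, real_inner_smul_left, real_inner_smul_right, norm_smul, norm_smul,
    mul_pow, mul_pow, Real.norm_eq_abs, Real.norm_eq_abs, sq_abs, sq_abs]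
  ring

lemma spiked_form_bound_of_inner_eq_zero {a δ₁ δ₂ : E} {d ρ : ℝ} (hd : 0 ≤ d) (hρ : 0 ≤ ρ)
    (ha : ⟪a, δ₂⟫ = 0) (hδ : ⟪δ₁, δ₂⟫ = 0) (c : ℝ) :
    d * ρ * ‖δ₂‖ ^ 2 * ‖a + c • δ₂‖ ^ 2 ≤
      (d + ρ * ‖δ₁ + δ₂‖ ^ 2) * (d * ‖a‖ ^ 2 + ρ * ⟪δ₁ + δ₂, a + c • δ₂⟫ ^ 2) := by
  set r := ⟪δ₁ + δ₂, a + c • δ₂⟫ with hr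
  have hr' : r = ⟪δ₁, a⟫ + c * ‖δ₂‖ ^ 2 := by
    simp only [hr, inner_add_left, inner_add_right, real_inner_smul_right, hδ,
      real_inner_comm a δ₂, ha, real_inner_self_eq_norm_sq]
    ring
  have hv : ‖a + c • δ₂‖ ^ 2 = ‖a‖ ^ 2 + c ^ 2 * ‖δ₂‖ ^ 2 := by
    simpa [ha] using norm_smul_add_smul_sq_real 1 c a δ₂
  have hδn : ‖δ₁ + δ₂‖ ^ 2 = ‖δ₁‖ ^ 2 + ‖δ₂‖ ^ 2 := by
    simpa [hδ] using norm_smul_add_smul_sq_real 1 1 δ₁ δ₂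
  have hsq : ‖d • a + (ρ * r) • δ₁‖ ^ 2 =
      d ^ 2 * ‖a‖ ^ 2 + 2 * d * ρ * r * ⟪δ₁, a⟫ + ρ ^ 2 * r ^ 2 * ‖δ₁‖ ^ 2 := by
    rw [norm_smul_add_smul_sq_real, real_inner_comm]
    ring
  have hcs : ⟪δ₁, a⟫ ^ 2 ≤ ‖δ₁‖ ^ 2 * ‖a‖ ^ 2 := by
    rw [← mul_pow]
    exact sq_le_sq.2 ((abs_real_inner_le_norm δ₁ a).trans (le_abs_self _))
  have hsos : (d + ρ * ‖δ₁ + δ₂‖ ^ 2) * (d * ‖a‖ ^ 2 + ρ * r ^ 2) -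
      d * ρ * ‖δ₂‖ ^ 2 * ‖a + c • δ₂‖ ^ 2 =
      ‖d • a + (ρ * r) • δ₁‖ ^ 2 + d * ρ * (‖δ₁‖ ^ 2 * ‖a‖ ^ 2 - ⟪δ₁, a⟫ ^ 2) +
        ρ ^ 2 * ‖δ₂‖ ^ 2 * r ^ 2 := by
    rw [hsq, hδn, hv, hr']
    ring
  have hnonneg : 0 ≤ ‖d • a + (ρ * r) • δ₁‖ ^ 2 +
      d * ρ * (‖δ₁‖ ^ 2 * ‖a‖ ^ 2 - ⟪δ₁, a⟫ ^ 2) + ρ ^ 2 * ‖δ₂‖ ^ 2 * r ^ 2 := by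
    have := mul_nonneg (mul_nonneg hd hρ) (sub_nonneg.2 hcs)
    positivity
  linarith

variable {T : E →ₗ[ℝ] E} {W : Submodule ℝ E} {L d ε ρ : ℝ} {β δ : E}

lemma effectiveGap_mul_norm_sq_le [W.HasOrthogonalProjection] (hd : 0 < d) (hρ : 0 ≤ ρ) {v : E}
    (hv : v ∈ W ⊔ ℝ ∙ δ) :
    effectiveGap W δ d ρ * ‖v‖ ^ 2 ≤ d * ‖W.starProjection v‖ ^ 2 + ρ * ⟪δ, v⟫ ^ 2 := by
  obtain ⟨w, hw, _, hcδ, rfl⟩ := mem_sup.1 hv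
  obtain ⟨c, rfl⟩ := mem_span_singleton.1 hcδ
  set δ₁ := W.starProjection δ
  set δ₂ := Wᗮ.starProjection δ with hδ₂
  have hdec : δ₁ + δ₂ = δ := W.starProjection_add_starProjection_orthogonal δ
  have hδ₁W : δ₁ ∈ W := starProjection_apply_mem W δ
  have hδ₂W : δ₂ ∈ Wᗮ := starProjection_apply_mem Wᗮ δ
  have haW : w + c • δ₁ ∈ W := add_mem hw (smul_mem _ c hδ₁W)
  have hsplit : w + c • δ = (w + c • δ₁) + c • δ₂ := by rw [← hdec, smul_add, add_assoc]
  have hproj : W.starProjection (w + c • δ) = w + c • δ₁ :=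
    eq_starProjection_of_mem_orthogonal' haW (smul_mem _ c hδ₂W) hsplit
  have hbound := spiked_form_bound_of_inner_eq_zero hd.le hρ (hδ₂W _ haW) (hδ₂W _ hδ₁W) c
  rw [hdec, ← hsplit] at hbound
  rw [hproj, effectiveGap, ← hδ₂, div_mul_eq_mul_div, div_le_iff₀ (by positivity), mul_comm (_ + _)]
  simpa only [mul_comm] using hbound

namespace IsQuasiSpiked

lemma inner_map_self_le (h : IsQuasiSpiked T W L d ε) {x : E} (hx : x ∈ Wᗮ) :
    ⟪x, T x⟫ ≤ (L + ε) * ‖x‖ ^ 2 := by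
  have hcs : ⟪x, T x - L • x⟫ ≤ ‖x‖ * (ε * ‖x‖) :=
    (real_inner_le_norm _ _).trans
      (mul_le_mul_of_nonneg_left (h.norm_map_sub_smul_le x hx) (norm_nonneg x))
  rw [inner_sub_right, real_inner_smul_right, real_inner_self_eq_norm_sq] at hcs
  linarith

lemma mul_norm_sq_add_le_inner_map_self [W.HasOrthogonalProjection]
    (h : IsQuasiSpiked T W L d ε) (x : E) :
    L * ‖x‖ ^ 2 + d * ‖W.starProjection x‖ ^ 2 ≤ ⟪x, T x⟫ := by
  set a := W.starProjection x
  set b := Wᗮ.starProjection x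
  have ha : a ∈ W := starProjection_apply_mem W x
  have hb : b ∈ Wᗮ := starProjection_apply_mem Wᗮ x
  have hnorm : ‖x‖ ^ 2 = ‖a‖ ^ 2 + ‖b‖ ^ 2 := norm_sq_eq_add_norm_sq_starProjection x W
  have hinner : ⟪x, T x⟫ = ⟪a, T a⟫ + ⟪b, T b⟫ := by
    rw [← W.starProjection_add_starProjection_orthogonal x, map_add, inner_add_left,
      inner_add_right, inner_add_right, inner_right_of_mem_orthogonal ha
        (h.map_mem_orthogonal b hb), inner_left_of_mem_orthogonal (h.map_mem a ha) hb]
    ring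
  rw [hinner, hnorm]
  linarith [h.le_inner_map_self a ha, h.le_inner_map_self_orthogonal b hb]

lemma injective [W.HasOrthogonalProjection] (h : IsQuasiSpiked T W L d ε) :
    Function.Injective T := by
  refine (injective_iff_map_eq_zero T).2 fun x hx ↦ ?_
  have hle := h.mul_norm_sq_add_le_inner_map_self x
  rw [hx, inner_zero_right] at hle
  by_contra hx0
  have := h.base_pos
  have := h.gap_pos
  have : 0 < L * ‖x‖ ^ 2 + d * ‖W.starProjection x‖ ^ 2 := by positivity
  linarith

variable [FiniteDimensional ℝ W]

lemma norm_sub_starProjection_le (h : IsQuasiSpiked T W L d ε) (hβ : T β = δ) :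
    ‖β - (W ⊔ ℝ ∙ δ).starProjection β‖ ≤ ε / L * ‖β‖ := by
  set V := W ⊔ ℝ ∙ δ
  set a := W.starProjection β
  set b := Wᗮ.starProjection β
  have ha : a ∈ W := starProjection_apply_mem W β
  have hb : b ∈ Wᗮ := starProjection_apply_mem Wᗮ β
  have hab : a + b = β := W.starProjection_add_starProjection_orthogonal β
  have hTb : T b ∈ V := by
    rw [show T b = δ - T a by rw [← hβ, ← hab, map_add, add_sub_cancel_left]]
    exact sub_mem (mem_sup_right (mem_span_singleton_self δ)) (mem_sup_left (h.map_mem a ha))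
  have hv : a + L⁻¹ • T b ∈ V := add_mem (mem_sup_left ha) (smul_mem _ _ hTb)
  have hsub : β - (a + L⁻¹ • T b) = -(L⁻¹ • (T b - L • b)) := by
    rw [smul_sub, inv_smul_smul₀ h.base_pos.ne', ← hab]
    abel
  have hproj : β - V.starProjection β = Vᗮ.starProjection (β - (a + L⁻¹ • T b)) := by
    rw [map_sub, starProjection_orthogonal_apply_eq_zero hv, sub_zero,
      starProjection_orthogonal_val]
  calc ‖β - V.starProjection β‖ ≤ ‖β - (a + L⁻¹ • T b)‖ :=
        hproj ▸ norm_starProjection_apply_le _ _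
    _ = L⁻¹ * ‖T b - L • b‖ := by
        rw [hsub, norm_neg, norm_smul, norm_inv, Real.norm_of_nonneg h.base_pos.le]
    _ ≤ L⁻¹ * (ε * ‖β‖) := by
        have hL := h.base_pos
        have hε := h.width_nonneg
        have hbβ : ‖b‖ ≤ ‖β‖ := norm_starProjection_apply_le _ _
        have hTb := h.norm_map_sub_smul_le b hb
        gcongr
        exact hTb.trans (by gcongr)
    _ = ε / L * ‖β‖ := by ring

lemma norm_starProjection_le_of_form_le (h : IsQuasiSpiked T W L d ε) (hρ : 0 < ρ) (hδ : δ ∉ W)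
    {x : E} (hx : ⟪x, T x⟫ + ρ * ⟪δ, x⟫ ^ 2 ≤ (L + ε) * ‖x‖ ^ 2) :
    ‖(W ⊔ ℝ ∙ δ).starProjection x‖ ≤ √(ε / effectiveGap W δ d ρ) * ‖x‖ := by
  set V := W ⊔ ℝ ∙ δ with hV
  have hgap := effectiveGap_pos h.gap_pos hρ hδ
  have hδV : δ ∈ V := mem_sup_right (mem_span_singleton_self δ)
  have hWV : W.starProjection (V.starProjection x) = W.starProjection x :=
    DFunLike.congr_fun (starProjection_comp_starProjection_of_le (le_sup_left : W ≤ V)) x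
  have hinner : ⟪δ, V.starProjection x⟫ = ⟪δ, x⟫ := by
    rw [← inner_starProjection_left_eq_right, starProjection_eq_self_iff.2 hδV]
  have hform := effectiveGap_mul_norm_sq_le h.gap_pos hρ.le
    (hV ▸ starProjection_apply_mem V x : V.starProjection x ∈ W ⊔ ℝ ∙ δ)
  rw [hWV, hinner] at hform
  refine le_of_sq_le_sq ?_ (by positivity)
  rw [mul_pow, Real.sq_sqrt (div_nonneg h.width_nonneg hgap.le), div_mul_eq_mul_div,
    le_div_iff₀ hgap]
  linarith [h.mul_norm_sq_add_le_inner_map_self x]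

lemma inner_le_of_form_le (h : IsQuasiSpiked T W L d ε) (hβ : T β = δ) (hρ : 0 < ρ) (hδ : δ ∉ W)
    {x : E} (hx : ⟪x, T x⟫ + ρ * ⟪δ, x⟫ ^ 2 ≤ (L + ε) * ‖x‖ ^ 2) :
    ⟪x, β⟫ ≤ (ε / L + √(ε / effectiveGap W δ d ρ)) * ‖β‖ * ‖x‖ := by
  set V := W ⊔ ℝ ∙ δ
  have hproj := h.norm_starProjection_le_of_form_le hρ hδ hx
  have hres := h.norm_sub_starProjection_le hβ
  calc ⟪x, β⟫ = ⟪V.starProjection x, β⟫ + ⟪x, β - V.starProjection β⟫ := by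
        rw [inner_starProjection_left_eq_right, inner_sub_right, add_sub_cancel]
    _ ≤ ‖V.starProjection x‖ * ‖β‖ + ‖x‖ * ‖β - V.starProjection β‖ :=
        add_le_add (real_inner_le_norm _ _) (real_inner_le_norm _ _)
    _ ≤ √(ε / effectiveGap W δ d ρ) * ‖x‖ * ‖β‖ + ‖x‖ * (ε / L * ‖β‖) := by gcongr
    _ = (ε / L + √(ε / effectiveGap W δ d ρ)) * ‖β‖ * ‖x‖ := by ring

end IsQuasiSpiked

end QuasiSpiked

section Rotation

variable {ι E : Type*} [Fintype ι] [NormedAddCommGroup E] [InnerProductSpace ℝ E]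

lemma sum_abs_le_sqrt_card_mul_sqrt_sum_sq {ι : Type*} (s : Finset ι) (y : ι → ℝ) :
    ∑ i ∈ s, |y i| ≤ √s.card * √(∑ i ∈ s, y i ^ 2) := by
  rw [← Real.sqrt_mul (Nat.cast_nonneg _)]
  refine Real.le_sqrt_of_sq_le ?_
  simpa only [sq_abs] using sq_sum_le_card_mul_sum_sq (s := s) (f := fun i ↦ |y i|)

lemma norm_starProjection_span_image_sq (u : OrthonormalBasis ι ℝ E) (s : Finset ι)
    [(span ℝ (u '' s)).HasOrthogonalProjection] (x : E) :
    ‖(span ℝ (u '' s)).starProjection x‖ ^ 2 = ∑ i ∈ s, ⟪u i, x⟫ ^ 2 := by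
  classical
  rw [← u.sum_sq_inner_right]
  refine (Finset.sum_subset_zero_on_sdiff s.subset_univ (fun i hi ↦ ?_) fun i hi ↦ ?_).symm
  · have his : i ∉ (s : Set ι) := by simpa using hi
    rw [inner_eq_zero_of_mem_span_image (starProjection_apply_mem _ x) his, zero_pow two_ne_zero]
  · have hui : u i ∈ span ℝ (u '' s) := subset_span (Set.mem_image_of_mem u hi)
    rw [← inner_starProjection_left_eq_right, starProjection_eq_self_iff.2 hui]

lemma inner_map_add_rankOne_self (T : E →ₗ[ℝ] E) (ρ : ℝ) (δ x : E) :
    ⟪x, (T + ρ • (rankOne ℝ δ δ : E →ₗ[ℝ] E)) x⟫ = ⟪x, T x⟫ + ρ * ⟪δ, x⟫ ^ 2 := by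
  simp only [LinearMap.add_apply, LinearMap.smul_apply, ContinuousLinearMap.coe_coe,
    rankOne_apply, inner_add_right, real_inner_smul_right, real_inner_comm δ x]
  ring

namespace IsQuasiSpiked

variable {T : E →ₗ[ℝ] E} {W : Submodule ℝ E} [FiniteDimensional ℝ W] {L d ε ρ : ℝ} {β δ : E}

lemma sqrt_sum_sq_inner_le (h : IsQuasiSpiked T W L d ε) (hβ : T β = δ) (hρ : 0 < ρ)
    (hδ : δ ∉ W) {u : OrthonormalBasis ι ℝ E} {η : ι → ℝ}
    (hu : IsEigenbasis (T + ρ • (rankOne ℝ δ δ : E →ₗ[ℝ] E)) u η) {s : Finset ι}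
    (hs : ∀ i ∈ s, η i ≤ L + ε) :
    √(∑ i ∈ s, ⟪u i, β⟫ ^ 2) ≤ (ε / L + √(ε / effectiveGap W δ d ρ)) * ‖β‖ := by
  have : FiniteDimensional ℝ (span ℝ (u '' s)) := .span_of_finite ℝ (Set.toFinite _)
  set x := (span ℝ (u '' s)).starProjection β with hx
  have hxmem : x ∈ span ℝ (u '' s) := starProjection_apply_mem _ β
  have hform : ⟪x, T x⟫ + ρ * ⟪δ, x⟫ ^ 2 ≤ (L + ε) * ‖x‖ ^ 2 := by
    rw [← inner_map_add_rankOne_self]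
    exact hu.inner_map_self_le_mul_norm_sq fun i hi ↦
      hs i (not_not.1 fun his ↦ hi (inner_eq_zero_of_mem_span_image hxmem his))
  have hxβ : ⟪x, β⟫ = ‖x‖ * ‖x‖ := by
    rw [← real_inner_self_eq_norm_mul_norm, hx, inner_starProjection_left_eq_right,
      inner_starProjection_left_eq_right, starProjection_eq_self_iff.2 hxmem]
  have hle := h.inner_le_of_form_le hβ hρ hδ hform
  rw [hxβ] at hle
  rw [← norm_starProjection_span_image_sq, Real.sqrt_sq (norm_nonneg _), ← hx]
  have hL := h.base_pos
  have hε := h.width_nonneg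
  obtain hx0 | hx0 := (norm_nonneg x).eq_or_lt
  · rw [← hx0]
    positivity
  · exact le_of_mul_le_mul_right hle hx0

lemma eigenvalue_add_rankOne_le (h : IsQuasiSpiked T W L d ε) {p : ℕ}
    {u : OrthonormalBasis (Fin p) ℝ E} {η : Fin p → ℝ}
    (hu : IsEigenbasis (T + ρ • (rankOne ℝ δ δ : E →ₗ[ℝ] E)) u η) (hη : Antitone η) {i : Fin p}
    (hi : Module.finrank ℝ W < i) : η i ≤ L + ε := by
  have hfinrank : Module.finrank ℝ ↥(W ⊔ ℝ ∙ δ) ≤ Module.finrank ℝ W + 1 :=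
    (finrank_add_le_finrank_add_finrank _ _).trans
      (Nat.add_le_add_left (by simpa using finrank_span_le_card (R := ℝ) {δ}) _)
  refine hu.eigenvalue_le_of_inner_map_self_le hη (fun x hx ↦ ?_) (hfinrank.trans hi)
  have hxW : x ∈ Wᗮ := orthogonal_le le_sup_left hx
  have hδx : ⟪δ, x⟫ = 0 := hx δ (mem_sup_right (mem_span_singleton_self δ))
  rw [inner_map_add_rankOne_self, hδx, zero_pow two_ne_zero, mul_zero, add_zero]
  exact h.inner_map_self_le hxW

theorem sum_abs_inner_div_sqrt_sum_sq_inner_le (h : IsQuasiSpiked T W L d ε) (hβ : T β = δ)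
    (hρ : 0 < ρ) (hδ : δ ∉ W) {p : ℕ} {u : OrthonormalBasis (Fin p) ℝ E} {η : Fin p → ℝ}
    (hu : IsEigenbasis (T + ρ • (rankOne ℝ δ δ : E →ₗ[ℝ] E)) u η) (hη : Antitone η) :
    (∑ i, |⟪u i, β⟫|) / √(∑ i, ⟪u i, β⟫ ^ 2) ≤
      √(Module.finrank ℝ W + 1) + √(p - Module.finrank ℝ W - 1 : ℕ) *
        (ε / L + √(ε / effectiveGap W δ d ρ)) := by
  set k := Module.finrank ℝ W
  set K := ε / L + √(ε / effectiveGap W δ d ρ)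
  have hK : 0 ≤ K := add_nonneg (div_nonneg h.width_nonneg h.base_pos.le) (Real.sqrt_nonneg _)
  rw [u.sum_sq_inner_right, Real.sqrt_sq (norm_nonneg β)]
  let head : Finset (Fin p) := {i | i.1 < k + 1}
  have hcard : head.card = min p (k + 1) := Fin.card_filter_val_lt
  have hhead : ∑ i ∈ head, |⟪u i, β⟫| ≤ √(k + 1) * ‖β‖ := by
    have hcard_le : (head.card : ℝ) ≤ k + 1 := mod_cast hcard.trans_le (min_le_right _ _)
    have hsum_le : √(∑ i ∈ head, ⟪u i, β⟫ ^ 2) ≤ ‖β‖ :=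
      Real.sqrt_le_iff.2 ⟨norm_nonneg β, u.sum_sq_inner_right β ▸
        Finset.sum_le_univ_sum_of_nonneg fun i ↦ sq_nonneg _⟩
    exact (sum_abs_le_sqrt_card_mul_sqrt_sum_sq _ _).trans (by gcongr)
  have htail : ∑ i ∈ headᶜ, |⟪u i, β⟫| ≤ √(p - k - 1 : ℕ) * (K * ‖β‖) := by
    have hcard_compl : headᶜ.card = p - k - 1 := by
      rw [Finset.card_compl, Fintype.card_fin, hcard]
      omega
    have hsum_le := h.sqrt_sum_sq_inner_le hβ hρ hδ hu (s := headᶜ) fun i hi ↦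
      h.eigenvalue_add_rankOne_le hu hη (by simpa [head] using hi)
    exact (sum_abs_le_sqrt_card_mul_sqrt_sum_sq _ _).trans (by rw [hcard_compl]; gcongr)
  refine div_le_of_le_mul₀ (norm_nonneg β) (by positivity) ?_
  rw [← Finset.sum_add_sum_compl head, add_mul, mul_assoc]
  exact add_le_add hhead htail

end IsQuasiSpiked

end Rotation

section Matrix

variable {n : Type*} [Fintype n]

lemma toLp_mem_span_image {κ : Type*} {v : n → n → ℝ}
    {b : OrthonormalBasis n ℝ (EuclideanSpace ℝ n)} (hb : ∀ i, b i = toLp 2 (v i)) {f : κ → n}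
    {s : Set n} (hf : ∀ i, f i ∈ s) {x : n → ℝ} (hx : x ∈ span ℝ (Set.range fun i ↦ v (f i))) :
    toLp 2 x ∈ span ℝ (b '' s) := by
  have hmem := mem_map_of_mem (f := (WithLp.linearEquiv 2 ℝ (n → ℝ)).symm.toLinearMap) hx
  rw [map_span] at hmem
  refine span_mono ?_ hmem
  rintro _ ⟨_, ⟨i, rfl⟩, rfl⟩
  exact ⟨f i, hf i, hb (f i)⟩

variable [DecidableEq n]

lemma exists_orthonormalBasis_eq_toLp (v : n → n → ℝ)
    (hv : ∀ i j, v i ⬝ᵥ v j = if i = j then (1 : ℝ) else 0) :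
    ∃ b : OrthonormalBasis n ℝ (EuclideanSpace ℝ n), ∀ i, b i = toLp 2 (v i) := by
  have hon : Orthonormal ℝ fun i ↦ toLp 2 (v i) := orthonormal_iff_ite.2 fun i j ↦ by
    rw [EuclideanSpace.inner_toLp_toLp, star_trivial, dotProduct_comm, hv]
  have hspan := hon.linearIndependent.span_eq_top_of_card_eq_finrank' finrank_euclideanSpace.symm
  exact ⟨.mk hon hspan.ge, fun i ↦ by rw [OrthonormalBasis.coe_mk]⟩

lemma toEuclideanLin_add_smul_vecMulVec_self (S : Matrix n n ℝ) (ρ : ℝ) (δ : n → ℝ) :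
    (S + ρ • vecMulVec δ δ).toEuclideanLin =
      S.toEuclideanLin + ρ • (rankOne ℝ (toLp 2 δ) (toLp 2 δ) : _ →ₗ[ℝ] EuclideanSpace ℝ n) := by
  have hrankOne := symm_toEuclideanLin_rankOne (𝕜 := ℝ) (toLp 2 δ) (toLp 2 δ)
  rw [LinearEquiv.symm_apply_eq, star_trivial] at hrankOne
  rw [map_add, map_smul, hrankOne]

lemma isEigenbasis_toEuclideanLin {A : Matrix n n ℝ} {v : n → n → ℝ} {μ : n → ℝ}
    {b : OrthonormalBasis n ℝ (EuclideanSpace ℝ n)} (hb : ∀ i, b i = toLp 2 (v i))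
    (hA : ∀ i, A *ᵥ v i = μ i • v i) : IsEigenbasis A.toEuclideanLin b μ := fun i ↦ by
  rw [hb, toLpLin_toLp, toLin'_apply, hA, toLp_smul]

lemma mulVec_transpose_of_transpose_mul_mul_eq_diagonal {A U : Matrix n n ℝ} {η : n → ℝ}
    (hU : Uᵀ * U = 1) (hdiag : Uᵀ * A * U = diagonal η) (i : n) :
    A *ᵥ Uᵀ i = η i • Uᵀ i := by
  have hAU : A * U = U * diagonal η := by
    rw [← hdiag, ← mul_assoc, ← mul_assoc, mul_eq_one_comm.1 hU, one_mul]
  ext j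
  have hji := congrFun (congrFun hAU j) i
  rw [mul_diagonal] at hji
  simpa [mul_comm, mulVec, mul_apply, dotProduct] using hji

lemma mulVec_nonsing_inv_mulVec_of_injective {S : Matrix n n ℝ}
    (hS : Function.Injective S.toEuclideanLin) (x : n → ℝ) : S *ᵥ (S⁻¹ *ᵥ x) = x := by
  have hunit : IsUnit S := mulVec_injective_iff_isUnit.1 fun y z hyz ↦
    toLp_injective 2 (hS (congrArg (toLp 2) hyz))
  rw [mulVec_mulVec, mul_nonsing_inv _ ((isUnit_iff_isUnit_det S).1 hunit), one_mulVec]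

end Matrix

lemma add_sqrt_div_le_mul_add_sqrt_div {L ε g : ℝ} (hL : 0 < L) (hε : 0 ≤ ε) (hεg : 2 * ε < g) :
    ε / L + √(ε / g) ≤ (L + ε) / L * (ε / L + √(ε / (g - 2 * ε))) := by
  have hfactor : 1 ≤ (L + ε) / L := (one_le_div hL).2 (by linarith)
  have hsqrt : √(ε / g) ≤ √(ε / (g - 2 * ε)) :=
    Real.sqrt_le_sqrt (div_le_div_of_nonneg_left hε (by linarith) (by linarith))
  exact (add_le_add_right hsqrt _).trans (le_mul_of_one_le_left (by positivity) hfactor)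

theorem rotation_l1_l2_ratio_quasi_spiked_general
    {p k : ℕ} (hkp : k < p) (S : Matrix (Fin p) (Fin p) ℝ)
    (lam : Fin p → ℝ) (xi : Fin p → Fin p → ℝ) (hpos : ∀ j, 0 < lam j) (hdesc : Antitone lam)
    (horth : ∀ i j, xi i ⬝ᵥ xi j = if i = j then (1 : ℝ) else 0)
    (heig : ∀ j, S *ᵥ xi j = lam j • xi j)
    (δ : Fin p → ℝ) (ρ : ℝ) (hρ : 0 < ρ)
    (U : Matrix (Fin p) (Fin p) ℝ) (hU : Uᵀ * U = 1) (η : Fin p → ℝ) (hη : Antitone η)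
    (hdiag : Uᵀ * (S + ρ • vecMulVec δ δ) * U = diagonal η)
    (d ε : ℝ) (hd : 0 < d) (hgap : ∀ j < ⟨k, hkp⟩, lam ⟨k, hkp⟩ + d ≤ lam j)
    (hquasi : lam ⟨k, hkp⟩ - lam ⟨p - 1, Nat.sub_one_lt_of_lt hkp⟩ ≤ ε)
    (δ1 δ2 : Fin p → ℝ) (hdec : δ = δ1 + δ2)
    (hδ1 : δ1 ∈ span ℝ (Set.range fun i : Fin k ↦ xi ⟨i, i.2.trans hkp⟩))
    (hδ2 : δ2 ∈ span ℝ (Set.range fun i : Fin (p - k) ↦ xi ⟨k + i, Nat.add_lt_of_lt_sub' i.2⟩))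
    (hδ2ne : δ2 ≠ 0) (dt : ℝ)
    (hdt : dt = d * ρ * (∑ i, δ2 i ^ 2) / (d + ρ * ∑ i, δ i ^ 2)) :
    (∑ i, |(Uᵀ *ᵥ (S⁻¹ *ᵥ δ)) i|) / √(∑ i, (Uᵀ *ᵥ (S⁻¹ *ᵥ δ)) i ^ 2) ≤
      √(k + 1) + √(p - k - 1 : ℕ) * (ε / lam ⟨p - 1, Nat.sub_one_lt_of_lt hkp⟩ + √(ε / dt)) := by
  obtain ⟨b, hb⟩ := exists_orthonormalBasis_eq_toLp xi horth
  obtain ⟨u, hu⟩ := exists_orthonormalBasis_eq_toLp Uᵀ fun i j ↦ by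
    rw [← one_apply, ← hU]; rfl
  set W := span ℝ (b '' Set.Iio ⟨k, hkp⟩) with hW
  have hfinrank : Module.finrank ℝ W = k := by
    rw [hW, ← Finset.coe_Iio, finrank_span_image, Fin.card_Iio]
  have hspiked : IsQuasiSpiked S.toEuclideanLin W (lam ⟨p - 1, Nat.sub_one_lt_of_lt hkp⟩) d ε :=
    (isEigenbasis_toEuclideanLin hb heig).isQuasiSpiked_of_antitone hdesc
      (fun j ↦ Fin.le_def.2 (by grind)) (hpos _) hd hgap hquasi
  have hu_eigen := isEigenbasis_toEuclideanLin hu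
    (mulVec_transpose_of_transpose_mul_mul_eq_diagonal hU hdiag)
  rw [toEuclideanLin_add_smul_vecMulVec_self] at hu_eigen
  have hδ₁W : toLp 2 δ1 ∈ W := toLp_mem_span_image hb (fun i ↦ Fin.lt_def.2 i.2) hδ1
  have hδ₂W : toLp 2 δ2 ∈ Wᗮ := span_image_compl_le_orthogonal b _
    (toLp_mem_span_image hb (fun i ↦ by simp [Fin.le_def]) hδ2)
  have hδW : toLp 2 δ ∉ W := by
    rw [hdec, toLp_add]
    exact add_notMem_of_mem_orthogonal hδ₁W hδ₂W ((toLp_eq_zero 2).not.2 hδ2ne)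
  have hgap_eq : effectiveGap W (toLp 2 δ) d ρ = dt := by
    rw [hdt, hdec, toLp_add, effectiveGap_add hδ₁W hδ₂W, ← toLp_add,
      EuclideanSpace.real_norm_sq_eq, EuclideanSpace.real_norm_sq_eq]
  have hβ : S.toEuclideanLin (toLp 2 (S⁻¹ *ᵥ δ)) = toLp 2 δ :=
    congrArg (toLp 2) (mulVec_nonsing_inv_mulVec_of_injective hspiked.injective δ)
  have hinner (i : Fin p) : ⟪u i, toLp 2 (S⁻¹ *ᵥ δ)⟫ = (Uᵀ *ᵥ (S⁻¹ *ᵥ δ)) i := by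
    rw [hu, EuclideanSpace.inner_toLp_toLp, star_trivial, dotProduct_comm, mulVec]
  simpa only [hinner, hfinrank, hgap_eq] using
    hspiked.sum_abs_inner_div_sqrt_sum_sq_inner_le hβ hρ hδW hu_eigen hη

/-- Theorem 2 (second part): under the quasi-spiked covariance structure
(Condition 2), with `δ = δ₁ + δ₂`, `δ₂ ≠ 0`, and `ε < d̃/2`, the ℓ1/ℓ2 ratio of
`Uᵀβ` is bounded by `√(k+1) + √(p−k−1)·((λ_p+ε)/λ_p)·(ε/λ_p + √(ε/(d̃−2ε)))`. -/
theorem rotation_l1_l2_ratio_quasi_spiked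
    {p k : ℕ} (hk : 1 ≤ k) (hkp : k < p)
    (S : Matrix (Fin p) (Fin p) ℝ) (hS : S.IsSymm)
    (lam : Fin p → ℝ) (xi : Fin p → (Fin p → ℝ))
    (hpos : ∀ j, 0 < lam j)
    (hdesc : ∀ i j : Fin p, i ≤ j → lam j ≤ lam i)
    (horth : ∀ i j : Fin p, xi i ⬝ᵥ xi j = if i = j then (1 : ℝ) else 0)
    (heig : ∀ j, S.mulVec (xi j) = lam j • xi j)
    (δ : Fin p → ℝ) (ρ : ℝ) (hρ : 0 < ρ)
    (U : Matrix (Fin p) (Fin p) ℝ) (hU : Uᵀ * U = 1)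
    (η : Fin p → ℝ) (hηdesc : ∀ i j : Fin p, i ≤ j → η j ≤ η i)
    (hdiag : Uᵀ * (S + ρ • vecMulVec δ δ) * U = Matrix.diagonal η)
    -- Condition 2 (quasi-spiked covariance structure)
    (d ε : ℝ) (hd : 0 < d) (hε : 0 < ε)
    (hgap : lam ⟨k, hkp⟩ + d ≤ lam ⟨k - 1, by omega⟩)
    (hquasi : lam ⟨k, hkp⟩ - lam ⟨p - 1, by omega⟩ ≤ ε)
    -- decomposition δ = δ₁ + δ₂ with δ₁ ∈ W₁, δ₂ ∈ W₂, δ₂ ≠ 0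
    (δ1 δ2 : Fin p → ℝ) (hdec : δ = δ1 + δ2)
    (hδ1 : δ1 ∈ Submodule.span ℝ
      (Set.range fun i : Fin k => xi ⟨i.1, lt_trans i.isLt hkp⟩))
    (hδ2 : δ2 ∈ Submodule.span ℝ
      (Set.range fun i : Fin (p - k) => xi ⟨k + i.1, by omega⟩))
    (hδ2ne : δ2 ≠ 0)
    -- d̃ and the smallness condition on ε
    (dt : ℝ)
    (hdt : dt = d * ρ * (∑ i, δ2 i ^ 2) / (d + ρ * ∑ i, δ i ^ 2))
    (hεdt : ε < dt / 2) :
    (∑ i, |(Uᵀ).mulVec (S⁻¹.mulVec δ) i|) /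
        Real.sqrt (∑ i, ((Uᵀ).mulVec (S⁻¹.mulVec δ) i) ^ 2) ≤
      Real.sqrt (k + 1) +
        Real.sqrt ((p - k - 1 : ℕ)) *
          ((lam ⟨p - 1, by omega⟩ + ε) / lam ⟨p - 1, by omega⟩) *
          (ε / lam ⟨p - 1, by omega⟩ + Real.sqrt (ε / (dt - 2 * ε))) := by
  have hrate := add_sqrt_div_le_mul_add_sqrt_div (hpos ⟨p - 1, by omega⟩) hε.le
    (show 2 * ε < dt by linarith)
  refine (rotation_l1_l2_ratio_quasi_spiked_general hkp S lam xi hpos (fun i j ↦ hdesc i j) horth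
    heig δ ρ hρ U hU η (fun i j ↦ hηdesc i j) hdiag d ε hd
    (fun j hj ↦ hgap.trans (hdesc _ _ (Fin.le_def.2 (by grind)))) hquasi δ1 δ2 hdec hδ1 hδ2 hδ2ne
    dt hdt).trans ?_
  rw [mul_assoc]
  gcongr
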